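/- (Degenerate coercivity when the initial measure is concentrated on a straight line.) Let 0 < s < 1 and let the collision kernel b satisfy b(cos θ)·θ^{2+2s} → K as θ → 0+ for some K > 0. Let α ∈ (2s, 2], let F₀ be a Borel probability measure on ℝ³ which is concentrated on some straight line L = {v₀ + τ w : τ ∈ ℝ} (i.e. F₀(L) = 1) but is not a single Dirac mass, let ψ₀ ∈ 𝒦^α be its characteristic function, and let ψ be a solution of the Fourier-transformed (Bobylev) homogeneous Boltzmann Cauchy problem with initial datum ψ₀. Then there exist R > 0, T > 0 and c > 0 such that for every t ∈ [0,T] and every measurable h : ℝ³ → ℂ with ∫ (1+|ξ|²)^s |h(ξ)|² dξ < ∞: ∫_{ℝ³} ( ∫_{S²} b(ξ·σ/|ξ|)(1 − |ψ(t,ξ⁻)|) dσ ) |h(ξ)|² dξ ≥ c · t · ∫_{{|ξ| ≥ R}} |ξ|^{2s} |h(ξ)|² dξ, where ξ⁻ = (ξ − |ξ|σ)/2. -/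

import Mathlib

/-!
For a characteristic function `φ` the defect `D = 1 - |φ|²` is even and satisfies
`D (ξ + η) ≤ 2 D ξ + 2 D η`. Write `D_t` for the defect of `ψ(t, ·)`.

Given a large frequency `ξ`, choose a unit vector `u` orthogonal to `ξ` and to the direction `w` of
the line. If `σ'` is the mirror image of `σ` across `u^⊥`, then `b` takes the same value at both,
and the two values of `ξ⁻` differ by `|ξ| (u·σ) u`, so the sum of their defects is at least half
the defect at this vector. For `σ` with `|ξ| (u·σ) ∈ [1, 4]` and angle `O(1/|ξ|)` to `ξ`, a set of
measure of order `|ξ|⁻²` on which `b` is at least of order `|ξ|^(2+2s)`, that vector lies in a fixed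
annulus of `w^⊥`. It therefore suffices to show `D_t ≥ c t` on this annulus for small `t`.

The phase of `ψ₀` is linear on `w^⊥`, so `D_0` vanishes there, and the equation gives
`D_t η / t → n η := 2 ∫ b D_0(η⁻) dσ`, which is positive for `η ≠ 0` because `F₀` is not a Dirac
mass. To make this pointwise limit uniform, apply Baire's theorem to the continuous functions
`D_t / t`: by quasi-subadditivity, smallness of `n` near `0` becomes smallness of `D_t / t` near `0`
uniformly in `t`, and this carries the lower bound at a point over to a neighbourhood of it.
Finally `n → 0` at `0`: it is enough to check this along rays, where a Baire bound on `n` and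
averaging the quasi-subadditivity inequality over the ray provide a dominating function.
-/

noncomputable section

open MeasureTheory Real Filter Metric Set
open scoped RealInnerProductSpace Topology

/-- ℝ³ as a Euclidean space. -/
abbrev E3 : Type := EuclideanSpace ℝ (Fin 3)

/-- The surface measure on the unit sphere S² ⊂ ℝ³. -/
def sphμ : Measure (sphere (0 : E3) 1) := (volume : Measure E3).toSphere

/-- The characteristic function (Fourier transform) of a Borel measure on ℝ³,
`ψ(ξ) = ∫ e^{-i v·ξ} dΨ(v)`. -/
def charFn (Ψ : Measure E3) (ξ : E3) : ℂ :=
  ∫ v, Complex.exp (-(Complex.I * (⟪v, ξ⟫ : ℂ))) ∂Ψ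

/-- `ψ` is a characteristic function of some Borel probability measure on ℝ³. -/
def IsCharFn (ψ : E3 → ℂ) : Prop :=
  ∃ Ψ : Measure E3, IsProbabilityMeasure Ψ ∧ ψ = charFn Ψ

/-- Finiteness of `‖φ - 1‖_α`, i.e. the quantitative part of membership in `𝒦^α`. -/
def KBdd (α : ℝ) (φ : E3 → ℂ) : Prop :=
  ∃ C : ℝ, ∀ ξ : E3, ξ ≠ 0 → ‖φ ξ - 1‖ ≤ C * ‖ξ‖ ^ α

/-- Membership in the space `𝒦^α`. -/
def memK (α : ℝ) (φ : E3 → ℂ) : Prop := IsCharFn φ ∧ KBdd α φ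

/-- The distance `‖φ - φ'‖_α = sup_{ξ ≠ 0} |φ(ξ) - φ'(ξ)|/|ξ|^α` on `𝒦^α`. -/
def Kdist (α : ℝ) (φ φ' : E3 → ℂ) : ℝ :=
  ⨆ ξ : {ξ : E3 // ξ ≠ 0}, ‖φ ξ.1 - φ' ξ.1‖ / ‖(ξ.1 : E3)‖ ^ α

/-- `ξ⁺ = ξ/2 + (|ξ|/2)σ`. -/
def xiPlus (ξ : E3) (σ : sphere (0 : E3) 1) : E3 := (1/2 : ℝ) • ξ + (‖ξ‖ / 2) • (σ : E3)

/-- `ξ⁻ = ξ/2 - (|ξ|/2)σ`. -/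
def xiMinus (ξ : E3) (σ : sphere (0 : E3) 1) : E3 := (1/2 : ℝ) • ξ - (‖ξ‖ / 2) • (σ : E3)

/-- The Bobylev collision integrand at time `t`, frequency `ξ`, direction `σ`. -/
def bobylevIntegrand (b : ℝ → ℝ) (ψ : ℝ → E3 → ℂ) (t : ℝ) (ξ : E3)
    (σ : sphere (0 : E3) 1) : ℂ :=
  (b (⟪ξ, (σ : E3)⟫ / ‖ξ‖) : ℂ) *
    (ψ t (xiPlus ξ σ) * ψ t (xiMinus ξ σ) - ψ t ξ)

/-- `ψ : [0,∞) × ℝ³ → ℂ` is a solution of the Fourier-transformed (Bobylev)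
homogeneous Boltzmann Cauchy problem with collision kernel `b` and initial datum `ψ₀`. -/
structure IsBobylevSolution (b : ℝ → ℝ) (ψ : ℝ → E3 → ℂ) (ψ₀ : E3 → ℂ) : Prop where
  cont : ContinuousOn (fun p : ℝ × E3 => ψ p.1 p.2) (Set.Ici 0 ×ˢ Set.univ)
  init : ψ 0 = ψ₀
  isCharFn : ∀ t ≥ 0, IsCharFn (ψ t)
  integrable : ∀ t ≥ 0, ∀ ξ : E3, Integrable (bobylevIntegrand b ψ t ξ) sphμ
  eq : ∀ t ≥ 0, ∀ ξ : E3, HasDerivWithinAt (fun τ => ψ τ ξ)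
      (∫ σ, bobylevIntegrand b ψ t ξ σ ∂sphμ) (Set.Ici 0) t

/-- Continuity of `t ↦ ψ(t,·)` from `[0,∞)` into the metric space `(𝒦^α, ‖·‖_α)`. -/
def KContinuous (α : ℝ) (ψ : ℝ → E3 → ℂ) : Prop :=
  ∀ t₀ ∈ Set.Ici (0:ℝ), Tendsto (fun t => Kdist α (ψ t) (ψ t₀)) (𝓝[Set.Ici (0:ℝ)] t₀) (𝓝 0)

/-- The angular singularity assumption `b(cos θ) θ^{2+2s} → K` as `θ → 0+`. -/
def KernelSingular (b : ℝ → ℝ) (s K : ℝ) : Prop :=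
  Tendsto (fun θ : ℝ => b (Real.cos θ) * θ ^ (2 + 2*s)) (𝓝[>] 0) (𝓝 K)

/-! ### Quasi-subadditive functions -/

/-- A real function on a group is quasi-subadditive if it vanishes at `0`, is even and satisfies
the triangle inequality up to the factor `2`, as squares of seminorms do. The moduli defects of
characteristic functions, their rescalings and their limits are of this type. -/
structure QuasiSubadditive {G : Type*} [AddGroup G] (N : G → ℝ) : Prop where
  map_zero : N 0 = 0
  map_neg (x : G) : N (-x) = N x
  map_add_le (x y : G) : N (x + y) ≤ 2 * N x + 2 * N y

namespace QuasiSubadditive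

section Algebra

variable {G H ι : Type*} [AddGroup G] [AddGroup H] {N : G → ℝ}

lemma map_sub_le (hN : QuasiSubadditive N) (x y : G) : N (x - y) ≤ 2 * N x + 2 * N y := by
  simpa only [sub_eq_add_neg, hN.map_neg] using hN.map_add_le x (-y)

lemma nonneg (hN : QuasiSubadditive N) (x : G) : 0 ≤ N x := by
  have := hN.map_sub_le x x
  rw [sub_self, hN.map_zero] at this
  linarith

lemma comp_addMonoidHom (hN : QuasiSubadditive N) (f : H →+ G) :
    QuasiSubadditive fun x => N (f x) where
  map_zero := by rw [_root_.map_zero, hN.map_zero]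
  map_neg x := by rw [_root_.map_neg, hN.map_neg]
  map_add_le x y := by rw [map_add]; exact hN.map_add_le _ _

lemma const_mul (hN : QuasiSubadditive N) {c : ℝ} (hc : 0 ≤ c) :
    QuasiSubadditive fun x => c * N x where
  map_zero := by rw [hN.map_zero, mul_zero]
  map_neg x := by rw [hN.map_neg]
  map_add_le x y := by nlinarith [hN.map_add_le x y]

lemma of_tendsto {l : Filter ι} [l.NeBot] {Q : ι → G → ℝ}
    (hQ : ∀ᶠ t in l, QuasiSubadditive (Q t)) (hlim : ∀ x, Tendsto (Q · x) l (𝓝 (N x))) :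
    QuasiSubadditive N where
  map_zero := tendsto_nhds_unique (hlim 0) <|
    tendsto_const_nhds.congr' (hQ.mono fun _ h => h.map_zero.symm)
  map_neg x := tendsto_nhds_unique (hlim (-x)) <|
    (hlim x).congr' (hQ.mono fun _ h => (h.map_neg x).symm)
  map_add_le x y := le_of_tendsto_of_tendsto (hlim (x + y))
    (((hlim x).const_mul 2).add ((hlim y).const_mul 2)) (hQ.mono fun _ h => h.map_add_le x y)

lemma map_sum_le {G : Type*} [AddCommGroup G] {N : G → ℝ} (hN : QuasiSubadditive N)
    (s : Finset ι) (f : ι → G) : N (∑ i ∈ s, f i) ≤ 2 ^ s.card * ∑ i ∈ s, N (f i) := by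
  classical
  induction s using Finset.induction_on with
  | empty => simp [hN.map_zero]
  | insert a s ha ih =>
    rw [Finset.sum_insert ha, Finset.sum_insert ha, Finset.card_insert_of_notMem ha]
    have hpow : (1 : ℝ) ≤ 2 ^ s.card := one_le_pow₀ one_le_two
    calc N (f a + ∑ i ∈ s, f i) ≤ 2 * N (f a) + 2 * N (∑ i ∈ s, f i) := hN.map_add_le _ _
      _ ≤ 2 * (2 ^ s.card * N (f a)) + 2 * (2 ^ s.card * ∑ i ∈ s, N (f i)) := by
        gcongr
        exact le_mul_of_one_le_left (hN.nonneg _) hpow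
      _ = 2 ^ (s.card + 1) * (N (f a) + ∑ i ∈ s, N (f i)) := by ring

end Algebra

lemma tendsto_nhds_zero_of_forall_smul {E : Type*} [AddCommGroup E] [Module ℝ E]
    [TopologicalSpace E] [IsTopologicalAddGroup E] [ContinuousSMul ℝ E] [T2Space E]
    [FiniteDimensional ℝ E] {N : E → ℝ} (hN : QuasiSubadditive N)
    (hray : ∀ e, Tendsto (fun r : ℝ => N (r • e)) (𝓝 0) (𝓝 0)) : Tendsto N (𝓝 0) (𝓝 0) := by
  let B := Module.finBasis ℝ E
  have hcoord : ∀ i, Tendsto (B.coord i) (𝓝 0) (𝓝 0) := fun i => by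
    simpa using (B.coord i).continuous_of_finiteDimensional.tendsto 0
  have hsum : Tendsto (fun x => 2 ^ (Module.finrank ℝ E) * ∑ i, N (B.coord i x • B i))
      (𝓝 0) (𝓝 0) := by
    simpa using (tendsto_finsetSum Finset.univ fun i _ =>
      (hray (B i)).comp (hcoord i)).const_mul ((2 : ℝ) ^ Module.finrank ℝ E)
  refine squeeze_zero hN.nonneg (fun x => ?_) hsum
  simpa using hN.map_sum_le Finset.univ fun i => B.repr x i • B i

section Baire

variable {ι κ G : Type*} [AddGroup G] [TopologicalSpace G] [IsTopologicalAddGroup G]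
  [BaireSpace G] {l : Filter ι} [l.IsCountablyGenerated] {Q : ι → G → ℝ} {n : G → ℝ}

/- The sets where the bound `c j` holds from some index on are closed and cover `U`, so one of them
contains a ball; differences of points of that ball fill a neighbourhood of `0`. -/
theorem exists_eventually_prod_nhds_zero_le [Countable κ] (hcont : ∀ᶠ t in l, Continuous (Q t))
    (hQ : ∀ᶠ t in l, QuasiSubadditive (Q t)) {U : Set G} (hU : IsOpen U) (hne : U.Nonempty)
    (c : κ → ℝ) (hc : ∀ x ∈ U, ∃ j, ∀ᶠ t in l, Q t x ≤ c j) :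
    ∃ j, ∀ᶠ p in l ×ˢ 𝓝 0, Q p.1 p.2 ≤ 4 * c j := by
  obtain ⟨V, hV⟩ := l.exists_antitone_basis
  let A (i : κ × ℕ) : Set G :=
    {x | ∀ t ∈ V i.2, Continuous (Q t) → QuasiSubadditive (Q t) → Q t x ≤ c i.1}
  have hA_closed (i : κ × ℕ) : IsClosed (A i ∪ Uᶜ) := by
    refine IsClosed.union ?_ hU.isClosed_compl
    simp only [A, Set.ofPred_forall]
    exact isClosed_iInter fun t => isClosed_iInter fun _ => isClosed_iInter fun ht =>
      isClosed_iInter fun _ => isClosed_le ht continuous_const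
  have hA_cover : ⋃ i, (A i ∪ Uᶜ) = univ := by
    refine eq_univ_of_forall fun x => mem_iUnion.2 ?_
    by_cases hx : x ∈ U
    · obtain ⟨j, hj⟩ := hc x hx
      obtain ⟨k, hk⟩ := hV.mem_iff.1 hj
      exact ⟨(j, k), Or.inl fun t ht _ _ => hk ht⟩
    · obtain ⟨x₀, hx₀⟩ := hne
      obtain ⟨j, -⟩ := hc x₀ hx₀
      exact ⟨(j, 0), Or.inr hx⟩
  obtain ⟨x₀, hx₀U, hx₀⟩ :=
    (dense_iUnion_interior_of_closed hA_closed hA_cover).inter_open_nonempty U hU hne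
  obtain ⟨⟨j, k⟩, hx₀i⟩ := mem_iUnion.1 hx₀
  have hmem : ∀ᶠ y in 𝓝 x₀, y ∈ A (j, k) := by
    filter_upwards [isOpen_interior.mem_nhds hx₀i, hU.mem_nhds hx₀U] with y hy hyU
    exact (interior_subset hy).resolve_right (not_not_intro hyU)
  have htrans : Tendsto (fun z => x₀ + z) (𝓝 0) (𝓝 x₀) := by
    simpa using (continuous_const.add continuous_id).tendsto (0 : G) (f := fun z => x₀ + z)
  refine ⟨j, ?_⟩
  filter_upwards [((hcont.and hQ).and (hV.mem k)).prod_mk (htrans.eventually hmem)]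
    with ⟨t, z⟩ ⟨⟨⟨ht, htQ⟩, htk⟩, hz⟩
  have hx₀_le : Q t x₀ ≤ c j := hmem.self_of_nhds t htk ht htQ
  have hz_le : Q t (x₀ + z) ≤ c j := hz t htk ht htQ
  have := htQ.map_add_le (-x₀) (x₀ + z)
  rw [neg_add_cancel_left, htQ.map_neg] at this
  linarith

lemma exists_eventually_nhds_zero_le_of_tendsto [l.NeBot] (hcont : ∀ᶠ t in l, Continuous (Q t))
    (hQ : ∀ᶠ t in l, QuasiSubadditive (Q t)) (hlim : ∀ x, Tendsto (Q · x) l (𝓝 (n x))) :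
    ∃ C, ∀ᶠ x in 𝓝 0, n x ≤ C := by
  obtain ⟨m, hm⟩ := exists_eventually_prod_nhds_zero_le hcont hQ isOpen_univ univ_nonempty
    (fun m : ℕ => (m : ℝ)) fun x _ => by
      obtain ⟨m, hm⟩ := exists_nat_gt (n x)
      exact ⟨m, ((hlim x).eventually (gt_mem_nhds hm)).mono fun _ => le_of_lt⟩
  exact ⟨4 * m, (eventually_swap_iff.1 hm).curry.mono fun x hx => le_of_tendsto (hlim x) hx⟩

lemma tendsto_prod_nhds_zero (hcont : ∀ᶠ t in l, Continuous (Q t))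
    (hQ : ∀ᶠ t in l, QuasiSubadditive (Q t)) (hlim : ∀ x, Tendsto (Q · x) l (𝓝 (n x)))
    (hn : Tendsto n (𝓝 0) (𝓝 0)) :
    Tendsto (fun p : ι × G => Q p.1 p.2) (l ×ˢ 𝓝 0) (𝓝 0) := by
  refine tendsto_order.2 ⟨fun ε hε => ?_, fun ε hε => ?_⟩
  · filter_upwards [hQ.prod_inl (𝓝 0)] with p hp
    exact hε.trans_le (hp.nonneg _)
  · obtain ⟨U, hnU, hU, h0U⟩ := eventually_nhds_iff.1
      (hn.eventually (gt_mem_nhds (show 0 < ε / 5 by positivity)))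
    obtain ⟨-, hle⟩ := exists_eventually_prod_nhds_zero_le hcont hQ hU ⟨0, h0U⟩
      (fun _ : Unit => ε / 5) fun x hx =>
        ⟨(), ((hlim x).eventually (gt_mem_nhds (hnU x hx))).mono fun _ => le_of_lt⟩
    filter_upwards [hle] with p hp
    linarith

theorem exists_pos_forall_mem_le_of_tendsto (hcont : ∀ᶠ t in l, Continuous (Q t))
    (hQ : ∀ᶠ t in l, QuasiSubadditive (Q t)) (hlim : ∀ x, Tendsto (Q · x) l (𝓝 (n x)))
    (hn : Tendsto n (𝓝 0) (𝓝 0)) {A : Set G} (hA : IsCompact A) (hpos : ∀ x ∈ A, 0 < n x) :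
    ∃ c > 0, ∀ᶠ t in l, ∀ x ∈ A, c ≤ Q t x := by
  refine hA.induction_on (p := fun A => ∃ c > 0, ∀ᶠ t in l, ∀ x ∈ A, c ≤ Q t x)
    ⟨1, one_pos, by simp⟩ ?_ ?_ fun x hx => ?_
  · rintro A B hAB ⟨c, hc, hB⟩
    exact ⟨c, hc, hB.mono fun t ht x hx => ht x (hAB hx)⟩
  · rintro A B ⟨c, hc, hA⟩ ⟨d, hd, hB⟩
    refine ⟨min c d, lt_min hc hd, ?_⟩
    filter_upwards [hA, hB] with t htA htB x hx
    exact hx.elim (fun h => (min_le_left c d).trans (htA x h))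
      fun h => (min_le_right c d).trans (htB x h)
  · obtain ⟨P, hP, S, hS, hsmall⟩ := eventually_prod_iff.1 <|
      (tendsto_prod_nhds_zero hcont hQ hlim hn).eventually
        (gt_mem_nhds (show 0 < n x / 8 by linarith [hpos x hx]))
    have htrans : Tendsto (fun y => -x + y) (𝓝[A] x) (𝓝 0) := by
      simpa using ((continuous_const_add (-x)).tendsto x).mono_left nhdsWithin_le_nhds
    refine ⟨{y | S (-x + y)}, htrans.eventually hS, n x / 8, by linarith [hpos x hx], ?_⟩
    have hlower := (hlim x).eventually (lt_mem_nhds (show n x / 2 < n x by linarith [hpos x hx]))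
    filter_upwards [hP, hQ, hlower] with t htP htQ hlt y hy
    have := htQ.map_sub_le y (-x + y)
    rw [show y - (-x + y) = x by simp [sub_eq_add_neg]] at this
    linarith [hsmall htP hy]

end Baire

section Integral

variable {X : Type*} [MeasurableSpace X] {μ : Measure X} {g : X → ℝ → ℝ}

/- Integrate `f r ≤ 2 f x + 2 f (x - r)` over `|x| ≤ δ`. -/
lemma mul_le_intervalIntegral {f : ℝ → ℝ} (hf : QuasiSubadditive f) (hcont : Continuous f)
    {δ r : ℝ} (hr : |r| ≤ δ) : δ * f r ≤ 2 * ∫ x in -(2 * δ)..2 * δ, f x := by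
  have hmono {a c : ℝ} (ha : -(2 * δ) ≤ a) (hac : a ≤ c) (hc : c ≤ 2 * δ) :
      ∫ x in a..c, f x ≤ ∫ x in -(2 * δ)..2 * δ, f x :=
    intervalIntegral.integral_mono_interval ha hac hc (Eventually.of_forall hf.nonneg)
      (hcont.intervalIntegrable _ _)
  obtain ⟨hr₁, hr₂⟩ := abs_le.1 hr
  have hint : ∫ _ in -δ..δ, f r ≤ ∫ x in -δ..δ, (2 * f x + 2 * f (x - r)) := by
    refine intervalIntegral.integral_mono_on (by linarith)
      (continuous_const.intervalIntegrable _ _)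
      (Continuous.intervalIntegrable (by fun_prop) _ _) fun x _ => ?_
    simpa using hf.map_sub_le x (x - r)
  rw [intervalIntegral.integral_const, smul_eq_mul, intervalIntegral.integral_add
    (Continuous.intervalIntegrable (by fun_prop) _ _)
    (Continuous.intervalIntegrable (by fun_prop) _ _), intervalIntegral.integral_const_mul,
    intervalIntegral.integral_const_mul, intervalIntegral.integral_comp_sub_right f] at hint
  have hcentre : ∫ x in -δ..δ, f x ≤ ∫ x in -(2 * δ)..2 * δ, f x :=
    hmono (by linarith) (by linarith) (by linarith)
  have hshift : ∫ x in -δ - r..δ - r, f x ≤ ∫ x in -(2 * δ)..2 * δ, f x :=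
    hmono (by linarith) (by linarith) (by linarith)
  linarith

theorem tendsto_integral_nhds_zero [SFinite μ] (hg : ∀ σ, QuasiSubadditive (g σ))
    (hcont : ∀ σ, Continuous (g σ))
    (hmeas : AEStronglyMeasurable (fun p : X × ℝ => g p.1 p.2) (μ.prod volume))
    (hint : ∀ r, Integrable (g · r) μ) {C : ℝ} (hC : ∀ᶠ r in 𝓝 0, ∫ σ, g σ r ∂μ ≤ C) :
    Tendsto (fun r => ∫ σ, g σ r ∂μ) (𝓝 0) (𝓝 0) := by
  obtain ⟨ρ, hρ, hC⟩ := Metric.eventually_nhds_iff.1 hC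
  have hδ : 0 < ρ / 3 := by positivity
  set δ := ρ / 3 with hδ_def
  let ν : Measure ℝ := volume.restrict (Ioc (-(2 * δ)) (2 * δ))
  have hmeas_ν : AEStronglyMeasurable (fun p : X × ℝ => g p.1 p.2) (μ.prod ν) :=
    hmeas.mono_ac (Measure.AbsolutelyContinuous.rfl.prod
      Measure.restrict_le_self.absolutelyContinuous)
  have hprod : Integrable (fun p : X × ℝ => g p.1 p.2) (μ.prod ν) := by
    refine (integrable_prod_iff' hmeas_ν).2 ⟨Eventually.of_forall hint, ?_⟩
    refine Integrable.of_bound hmeas_ν.norm.prod_swap.integral_prod_right' C ?_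
    refine ae_restrict_of_forall_mem measurableSet_Ioc fun r hr => ?_
    have habs : |r| ≤ 2 * δ := abs_le.2 ⟨hr.1.le, hr.2⟩
    simp only [Real.norm_of_nonneg ((hg _).nonneg _)]
    rw [Real.norm_of_nonneg (integral_nonneg fun σ => (hg σ).nonneg r)]
    exact hC (by rw [Real.dist_eq, sub_zero]; linarith)
  have hdom (r : ℝ) (hr : |r| < δ) (σ : X) : ‖g σ r‖ ≤ 2 / δ * ∫ x, g σ x ∂ν := by
    rw [Real.norm_of_nonneg ((hg σ).nonneg r), div_mul_eq_mul_div, le_div_iff₀' hδ,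
      ← intervalIntegral.integral_of_le (by linarith)]
    exact (hg σ).mul_le_intervalIntegral (hcont σ) hr.le
  suffices Tendsto (fun r => ∫ σ, g σ r ∂μ) (𝓝 0) (𝓝 (∫ _ : X, (0 : ℝ) ∂μ)) by
    simpa only [integral_zero] using this
  refine tendsto_integral_filter_of_dominated_convergence (fun σ => 2 / δ * ∫ x, g σ x ∂ν)
    (Eventually.of_forall fun r => (hint r).aestronglyMeasurable) ?_
    (hprod.integral_prod_left.const_mul _) (Eventually.of_forall fun σ => ?_)
  · filter_upwards [Metric.ball_mem_nhds 0 hδ] with r hr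
    exact Eventually.of_forall (hdom r (by simpa using hr))
  · simpa only [(hg σ).map_zero] using (hcont σ).tendsto 0

end Integral

end QuasiSubadditive

/-! ### The modulus defect of a characteristic function -/

/-- The defect `1 - |φ|²` of the modulus of `φ`. It measures the smoothing effect of the collision
operator and, for a characteristic function, is quasi-subadditive. -/
def modulusDefect {E : Type*} (φ : E → ℂ) (ξ : E) : ℝ := 1 - ‖φ ξ‖ ^ 2

lemma modulusDefect_div_two_le {E : Type*} (φ : E → ℂ) (ξ : E) :
    modulusDefect φ ξ / 2 ≤ 1 - ‖φ ξ‖ := by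
  unfold modulusDefect
  nlinarith [sq_nonneg (1 - ‖φ ξ‖)]

lemma one_sub_cos_add_le (x y : ℝ) :
    1 - cos (x + y) ≤ 2 * (1 - cos x) + 2 * (1 - cos y) := by
  rw [cos_add]
  nlinarith [sq_nonneg (sin x - sin y), sq_nonneg (cos x + cos y - 2),
    sin_sq_add_cos_sq x, sin_sq_add_cos_sq y]

section CharFun

variable {E : Type*} [NormedAddCommGroup E] [InnerProductSpace ℝ E] [MeasurableSpace E]
  {μ : Measure E} [IsProbabilityMeasure μ]

lemma charFun_eq_exp_of_ae_inner_eq {η : E} {a : ℝ} (h : ∀ᵐ v ∂μ, ⟪v, η⟫ = a) :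
    charFun μ η = Complex.exp (a * Complex.I) := by
  rw [charFun_apply, integral_congr_ae (g := fun _ => Complex.exp (a * Complex.I))
    (h.mono fun v hv => by simp only [hv])]
  simp

lemma charFun_add_of_ae_inner_eq {η : E} {a : ℝ} (h : ∀ᵐ v ∂μ, ⟪v, η⟫ = a) (x : E) :
    charFun μ (x + η) = charFun μ x * charFun μ η := by
  rw [charFun_eq_exp_of_ae_inner_eq h, charFun_apply, charFun_apply, ← integral_mul_const]
  refine integral_congr_ae (h.mono fun v hv => ?_)
  simp only [inner_add_right, hv, ← Complex.exp_add]
  push_cast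
  ring_nf

lemma conj_mul_charFun_mul_sub_charFun_add {x y : E} {a : ℝ} (h : ∀ᵐ v ∂μ, ⟪v, x + y⟫ = a) :
    (starRingEnd ℂ) (charFun μ (x + y)) * (charFun μ x * charFun μ y - charFun μ (x + y)) =
      ((-modulusDefect (charFun μ) y : ℝ) : ℂ) := by
  have hx : charFun μ x = (starRingEnd ℂ) (charFun μ y) * charFun μ (x + y) := by
    rw [← charFun_neg, ← charFun_add_of_ae_inner_eq h, neg_add_eq_sub, add_sub_cancel_right]
  have hη : (starRingEnd ℂ) (charFun μ (x + y)) * charFun μ (x + y) = 1 := by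
    rw [Complex.conj_mul', charFun_eq_exp_of_ae_inner_eq h, Complex.norm_exp_ofReal_mul_I]
    norm_num
  have hy : (starRingEnd ℂ) (charFun μ y) * charFun μ y = (‖charFun μ y‖ ^ 2 : ℝ) := by
    rw [Complex.conj_mul', Complex.ofReal_pow]
  calc _ = (starRingEnd ℂ) (charFun μ (x + y)) * charFun μ (x + y) *
        ((starRingEnd ℂ) (charFun μ y) * charFun μ y - 1) := by rw [hx]; ring
    _ = _ := by rw [hη, hy, modulusDefect]; push_cast; ring

variable [BorelSpace E] [SecondCountableTopology E]

lemma integrable_one_sub_cos_inner (ξ : E) :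
    Integrable (fun p : E × E => 1 - cos ⟪p.1 - p.2, ξ⟫) (μ.prod μ) := by
  refine Integrable.of_bound (C := 2) (Continuous.aestronglyMeasurable (by fun_prop))
    (Eventually.of_forall fun p => ?_)
  rw [Real.norm_eq_abs, abs_le]
  constructor <;> linarith [cos_le_one ⟪p.1 - p.2, ξ⟫, neg_one_le_cos ⟪p.1 - p.2, ξ⟫]

lemma modulusDefect_charFun (ξ : E) :
    modulusDefect (charFun μ) ξ = ∫ p, (1 - cos ⟪p.1 - p.2, ξ⟫) ∂μ.prod μ := by
  have hnorm : ((‖charFun μ ξ‖ ^ 2 : ℝ) : ℂ) =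
      ∫ p, Complex.exp ((⟪p.1 - p.2, ξ⟫ : ℝ) * Complex.I) ∂μ.prod μ := by
    rw [Complex.ofReal_pow, ← Complex.mul_conj', ← charFun_neg, charFun_apply, charFun_apply,
      ← integral_prod_mul]
    congr with p
    rw [← Complex.exp_add, inner_neg_right, inner_sub_left]
    push_cast
    ring_nf
  have hint : Integrable (fun p : E × E => Complex.exp ((⟪p.1 - p.2, ξ⟫ : ℝ) * Complex.I))
      (μ.prod μ) :=
    Integrable.of_bound (C := 1) (Continuous.aestronglyMeasurable (by fun_prop))
      (Eventually.of_forall fun p => (Complex.norm_exp_ofReal_mul_I _).le)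
  have hre := congrArg Complex.re hnorm
  rw [Complex.ofReal_re, ← RCLike.re_eq_complex_re, ← integral_re hint] at hre
  simp only [RCLike.re_eq_complex_re, Complex.exp_ofReal_mul_I_re] at hre
  have hcos : Integrable (fun p : E × E => cos ⟪p.1 - p.2, ξ⟫) (μ.prod μ) := by
    simpa only [RCLike.re_eq_complex_re, Complex.exp_ofReal_mul_I_re] using hint.re
  rw [integral_sub (integrable_const _) hcos, modulusDefect, hre]
  simp

lemma quasiSubadditive_modulusDefect_charFun : QuasiSubadditive (modulusDefect (charFun μ)) where
  map_zero := by simp [modulusDefect]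
  map_neg ξ := by simp [modulusDefect, charFun_neg]
  map_add_le ξ η := by
    have hint := integrable_one_sub_cos_inner (μ := μ)
    simp only [modulusDefect_charFun, ← integral_const_mul]
    rw [← integral_add ((hint ξ).const_mul 2) ((hint η).const_mul 2)]
    refine integral_mono (hint _) (((hint ξ).const_mul 2).add ((hint η).const_mul 2)) fun p => ?_
    simp only [inner_add_right]
    exact one_sub_cos_add_le _ _

lemma ae_inner_sub_eq_zero_of_modulusDefect_eq_zero {w : E}
    (h : ∃ᶠ x : ℝ in 𝓝[≠] 0, modulusDefect (charFun μ) (x • w) = 0) :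
    ∀ᵐ p ∂μ.prod μ, ⟪p.1 - p.2, w⟫ = 0 := by
  obtain ⟨x, hx_lim, hx⟩ := exists_seq_forall_of_frequently h
  have hcos (k : ℕ) : ∀ᵐ p ∂μ.prod μ, cos ⟪p.1 - p.2, x k • w⟫ = 1 := by
    have hzero := hx k
    rw [modulusDefect_charFun, integral_eq_zero_iff_of_nonneg
      (fun p => sub_nonneg.2 (cos_le_one _)) (integrable_one_sub_cos_inner _)] at hzero
    exact hzero.mono fun p hp => (sub_eq_zero.1 hp).symm
  filter_upwards [ae_all_iff.2 hcos] with p hp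
  obtain ⟨hx_zero, hx_ne⟩ := tendsto_nhdsWithin_iff.1 hx_lim
  have hlim : Tendsto (fun k => x k * ⟪p.1 - p.2, w⟫) atTop (𝓝 0) := by
    simpa using hx_zero.mul_const ⟪p.1 - p.2, w⟫
  have hsmall := hlim.eventually (Ioo_mem_nhds (neg_lt_zero.2 two_pi_pos) two_pi_pos)
  obtain ⟨k, hk, hk_ne⟩ := (hsmall.and hx_ne).exists
  have hk_zero := (cos_eq_one_iff_of_lt_of_lt hk.1 hk.2).1 (by rw [← inner_smul_right]; exact hp k)
  exact (mul_eq_zero.1 hk_zero).resolve_left hk_ne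

section Line

variable {v₀ w : E} (hline : ∀ᵐ v ∂μ, ∃ τ : ℝ, v = v₀ + τ • w)
include hline

omit [BorelSpace E] [SecondCountableTopology E] [IsProbabilityMeasure μ] in
lemma ae_inner_eq_of_ae_mem_line {η : E} (hη : ⟪w, η⟫ = 0) : ∀ᵐ v ∂μ, ⟪v, η⟫ = ⟪v₀, η⟫ := by
  filter_upwards [hline] with v ⟨τ, hτ⟩
  rw [hτ, inner_add_left, real_inner_smul_left, hη, mul_zero, add_zero]

lemma modulusDefect_charFun_congr_of_ae_mem_line {ξ η : E} (h : ⟪w, ξ⟫ = ⟪w, η⟫) :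
    modulusDefect (charFun μ) ξ = modulusDefect (charFun μ) η := by
  rw [modulusDefect_charFun, modulusDefect_charFun]
  refine integral_congr_ae ?_
  filter_upwards [Measure.quasiMeasurePreserving_fst.ae hline,
    Measure.quasiMeasurePreserving_snd.ae hline] with p ⟨τ₁, h₁⟩ ⟨τ₂, h₂⟩
  simp only [h₁, h₂, add_sub_add_left_eq_sub, ← sub_smul, real_inner_smul_left, h]

lemma eventually_modulusDefect_smul_pos (hnotdirac : ∀ u, μ {u} ≠ 1) :
    ∀ᶠ x : ℝ in 𝓝[≠] 0, 0 < modulusDefect (charFun μ) (x • w) := by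
  by_contra hcon
  have hfreq : ∃ᶠ x : ℝ in 𝓝[≠] 0, modulusDefect (charFun μ) (x • w) = 0 :=
    (not_eventually.1 hcon).mono fun x hx =>
      le_antisymm (not_lt.1 hx) (quasiSubadditive_modulusDefect_charFun.nonneg _)
  have hae := Measure.ae_ae_of_ae_prod (ae_inner_sub_eq_zero_of_modulusDefect_eq_zero hfreq)
  obtain ⟨u, hu, τ, hτ⟩ := (hae.and hline).exists
  refine hnotdirac u ((mem_ae_iff_prob_eq_one (measurableSet_singleton u)).1 ?_)
  filter_upwards [hu, hline] with v hv ⟨τ', hτ'⟩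
  have hsub : u - v = (τ - τ') • w := by rw [hτ, hτ', add_sub_add_left_eq_sub, sub_smul]
  have hinner : ⟪u - v, u - v⟫ = 0 := by
    conv_lhs => rw [hsub, real_inner_smul_right, ← hsub, hv, mul_zero]
  exact (sub_eq_zero.1 (inner_self_eq_zero.1 hinner)).symm

end Line

end CharFun

/-! ### Spherical patches -/

open scoped Pointwise in
lemma measure_le_toSphere {E : Type*} [NormedAddCommGroup E] [NormedSpace ℝ E]
    [FiniteDimensional ℝ E] [Nontrivial E] [MeasurableSpace E] [BorelSpace E] (ν : Measure E)
    {S : Set (sphere (0 : E) 1)} (hS : MeasurableSet S) {A : Set E}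
    (hA : ∀ x ∈ A, ∃ r ∈ Ioo (0 : ℝ) 1, ∃ σ ∈ S, r • (σ : E) = x) : ν A ≤ ν.toSphere S := by
  rw [Measure.toSphere_apply' _ hS]
  have hdim : (1 : ENNReal) ≤ Module.finrank ℝ E := by exact_mod_cast Module.finrank_pos
  refine (measure_mono fun x hx => ?_).trans (le_mul_of_one_le_left' hdim)
  obtain ⟨r, hr, σ, hσ, rfl⟩ := hA x hx
  exact Set.smul_mem_smul hr (mem_image_of_mem _ hσ)

section Sphere

variable {E : Type*} [NormedAddCommGroup E] [InnerProductSpace ℝ E]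

/-- The action of a linear isometry on the unit sphere. -/
def sphereMap (L : E ≃ₗᵢ[ℝ] E) (σ : sphere (0 : E) 1) : sphere (0 : E) 1 :=
  ⟨L σ, by simp⟩

lemma continuous_sphereMap (L : E ≃ₗᵢ[ℝ] E) : Continuous (sphereMap L) :=
  (L.continuous.comp continuous_subtype_val).subtype_mk _

variable [MeasurableSpace E] [BorelSpace E] [FiniteDimensional ℝ E]

open scoped Pointwise in
lemma measurePreserving_sphereMap (L : E ≃ₗᵢ[ℝ] E) :
    MeasurePreserving (sphereMap L) (volume : Measure E).toSphere
      (volume : Measure E).toSphere := by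
  have hL := (continuous_sphereMap L).measurable
  refine ⟨hL, Measure.ext fun s hs => ?_⟩
  have hcone : Ioo (0 : ℝ) 1 • ((↑) '' (sphereMap L ⁻¹' s) : Set E) =
      L ⁻¹' (Ioo (0 : ℝ) 1 • ((↑) '' s)) := by
    ext x
    simp only [Set.mem_smul, Set.mem_image, Set.mem_preimage]
    constructor
    · rintro ⟨r, hr, _, ⟨σ, hσ, rfl⟩, rfl⟩
      exact ⟨r, hr, L σ, ⟨_, hσ, rfl⟩, (map_smul L r _).symm⟩
    · rintro ⟨r, hr, _, ⟨σ, hσ, rfl⟩, hx⟩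
      have hσ' : sphereMap L (sphereMap L.symm σ) = σ :=
        Subtype.ext (L.apply_symm_apply σ)
      exact ⟨r, hr, L.symm σ, ⟨sphereMap L.symm σ, hσ'.symm ▸ hσ, rfl⟩,
        by rw [← map_smul, hx, L.symm_apply_apply]⟩
  rw [Measure.map_apply hL hs, Measure.toSphere_apply' _ hs, Measure.toSphere_apply' _ (hL hs),
    hcone, L.measurePreserving.measure_preimage_emb L.toHomeomorph.measurableEmbedding]

lemma volume_setOf_forall_repr_mem_Icc {ι : Type*} [Fintype ι] (B : OrthonormalBasis ι ℝ E)
    (a c : ι → ℝ) :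
    volume {x | ∀ i, B.repr x i ∈ Icc (a i) (c i)} = ∏ i, ENNReal.ofReal (c i - a i) := by
  have hmp := (EuclideanSpace.volume_preserving_symm_measurableEquiv_toLp ι).comp
    B.measurePreserving_repr
  rw [← Real.volume_Icc_pi, ← hmp.measure_preimage measurableSet_Icc.nullMeasurableSet]
  congr 1
  ext x
  exact forall_and

end Sphere

lemma exists_unit_inner_eq_zero (x y : E3) : ∃ u : E3, ‖u‖ = 1 ∧ ⟪x, u⟫ = 0 ∧ ⟪y, u⟫ = 0 := by
  let L : E3 →ₗ[ℝ] ℝ × ℝ := (innerₛₗ ℝ x).prod (innerₛₗ ℝ y)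
  obtain ⟨z, hz, hz0⟩ := Submodule.exists_mem_ne_zero_of_ne_bot
    (LinearMap.ker_ne_bot_of_finrank_lt (f := L) (by simp))
  have hinner : ⟪x, z⟫ = 0 ∧ ⟪y, z⟫ = 0 := by simpa [L] using hz
  refine ⟨‖z‖⁻¹ • z, by simp [norm_smul, hz0], ?_, ?_⟩
  · rw [real_inner_smul_right, hinner.1, mul_zero]
  · rw [real_inner_smul_right, hinner.2, mul_zero]

lemma exists_orthonormalBasis_of_inner_eq_zero {e u : E3} (he : ‖e‖ = 1) (hu : ‖u‖ = 1)
    (heu : ⟪e, u⟫ = 0) : ∃ B : OrthonormalBasis (Fin 3) ℝ E3, B 0 = e ∧ B 1 = u := by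
  obtain ⟨v, hv, hev, huv⟩ := exists_unit_inner_eq_zero e u
  have hon : Orthonormal ℝ ![e, u, v] := by
    rw [orthonormal_iff_ite]
    intro i j
    fin_cases i <;> fin_cases j <;>
      simp [he, hu, hv, heu, hev, huv, real_inner_comm e, real_inner_comm u]
  exact ⟨OrthonormalBasis.mk hon (by
    rw [hon.linearIndependent.span_eq_top_of_card_eq_finrank' (by simp)]), by simp, by simp⟩

section Patch

open InnerProductGeometry

/-- The directions `σ` close to that of `ξ` whose `u`-coordinate is comparable to `r`. For
`u ⟂ ξ` this patch has angular size and distance to `ξ` both of order `r`. -/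
def sphericalPatch (ξ u : E3) (r : ℝ) : Set (sphere (0 : E3) 1) :=
  {σ | ⟪u, (σ : E3)⟫ ∈ Icc r (4 * r) ∧ angle ξ (σ : E3) ∈ Ioc 0 (8 * r)}

lemma measurableSet_sphericalPatch {ξ u : E3} {r : ℝ} : MeasurableSet (sphericalPatch ξ u r) := by
  refine MeasurableSet.inter ?_ ?_
  · exact (Continuous.measurable (by fun_prop)) measurableSet_Icc
  · have : Measurable fun σ : sphere (0 : E3) 1 => angle ξ (σ : E3) := by
      unfold angle
      exact measurable_arccos.comp (by fun_prop)
    exact this measurableSet_Ioc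

lemma inner_div_norm_eq_cos_angle {E : Type*} [NormedAddCommGroup E] [InnerProductSpace ℝ E]
    (ξ : E) (σ : sphere (0 : E) 1) : ⟪ξ, (σ : E)⟫ / ‖ξ‖ = cos (angle ξ (σ : E)) := by
  rw [cos_angle, norm_eq_of_mem_sphere, mul_one]

lemma angle_pos_of_inner_lt {E : Type*} [NormedAddCommGroup E] [InnerProductSpace ℝ E] {x y : E}
    (h : ⟪x, y⟫ < ‖x‖ * ‖y‖) : 0 < angle x y :=
  (angle_nonneg x y).lt_of_ne fun h0 => h.ne (inner_eq_mul_norm_of_angle_eq_zero h0.symm)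

lemma angle_le_pi_div_two_mul_sin {E : Type*} [NormedAddCommGroup E] [InnerProductSpace ℝ E]
    {x y : E} (h : 0 ≤ ⟪x, y⟫) : angle x y ≤ π / 2 * sin (angle x y) := by
  have hsin := mul_le_sin (angle_nonneg x y)
    (arccos_le_pi_div_two.2 (div_nonneg h (by positivity)))
  calc angle x y = π / 2 * (2 / π * angle x y) := by field_simp
    _ ≤ _ := by gcongr

lemma exists_smul_eq_of_mem_box {e u : E3} (he : ‖e‖ = 1) {r z : ℝ} (hr : 0 < r)
    (hr' : r ≤ 1 / 10) {x : E3} (hxe : ⟪e, x⟫ ∈ Icc (1 / 2) (3 / 4))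
    (hxu : ⟪u, x⟫ ∈ Icc r (2 * r)) (hz : z ∈ Icc 0 r)
    (hx : ‖x‖ ^ 2 = ⟪e, x⟫ ^ 2 + ⟪u, x⟫ ^ 2 + z ^ 2) :
    ∃ t ∈ Ioo (0 : ℝ) 1, ∃ σ ∈ sphericalPatch e u r, t • (σ : E3) = x := by
  obtain ⟨hxe₁, hxe₂⟩ := hxe
  obtain ⟨hxu₁, hxu₂⟩ := hxu
  obtain ⟨hz₁, hz₂⟩ := hz
  have hlt : ‖x‖ < 1 := by nlinarith [norm_nonneg x]
  have hge : 1 / 2 ≤ ‖x‖ := by nlinarith [norm_nonneg x]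
  have hpos : 0 < ‖x‖ := by linarith
  have hangle_pos : 0 < angle e x := angle_pos_of_inner_lt (by
    rw [he, one_mul]
    nlinarith)
  have hsin : sin (angle e x) ≤ 5 * r := by
    have hsq : sin (angle e x) ^ 2 * ‖x‖ ^ 2 = ⟪u, x⟫ ^ 2 + z ^ 2 := by
      have hcos := cos_angle_mul_norm_mul_norm e x
      rw [he, one_mul] at hcos
      rw [sin_sq, sub_mul, one_mul, ← mul_pow, hcos, hx]
      ring
    have hx_sq : sin (angle e x) ^ 2 * (1 / 2) ^ 2 ≤ sin (angle e x) ^ 2 * ‖x‖ ^ 2 := by gcongr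
    refine le_of_sq_le_sq ?_ (by linarith)
    nlinarith
  have hangle_le : angle e x ≤ 8 * r := by
    have := angle_le_pi_div_two_mul_sin (show 0 ≤ ⟪e, x⟫ by linarith)
    nlinarith [pi_lt_d2, pi_pos]
  refine ⟨‖x‖, ⟨hpos, hlt⟩, ⟨‖x‖⁻¹ • x, by simp [norm_smul, hpos.ne']⟩, ⟨?_, ?_⟩,
    smul_inv_smul₀ hpos.ne' x⟩
  · rw [real_inner_smul_right, inv_mul_eq_div, mem_Icc, le_div_iff₀ hpos, div_le_iff₀ hpos]
    constructor <;> nlinarith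
  · rw [angle_smul_right_of_pos _ _ (inv_pos.2 hpos)]
    exact ⟨hangle_pos, hangle_le⟩

lemma ofReal_sq_div_four_le_sphμ_sphericalPatch {ξ u : E3} (hξ : ξ ≠ 0) (hu : ‖u‖ = 1)
    (hξu : ⟪ξ, u⟫ = 0) {r : ℝ} (hr : 0 < r) (hr' : r ≤ 1 / 10) :
    ENNReal.ofReal (r ^ 2 / 4) ≤ sphμ (sphericalPatch ξ u r) := by
  have hξ_norm := norm_pos_iff.2 hξ
  set e := ‖ξ‖⁻¹ • ξ with he_def
  have he : ‖e‖ = 1 := norm_smul_inv_norm hξ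
  have hpatch : sphericalPatch ξ u r = sphericalPatch e u r := by
    simp only [sphericalPatch, he_def, angle_smul_left_of_pos _ _ (inv_pos.2 hξ_norm)]
  obtain ⟨B, hBe, hBu⟩ := exists_orthonormalBasis_of_inner_eq_zero he hu
    (by rw [he_def, real_inner_smul_left, hξu, mul_zero])
  have hbox : ENNReal.ofReal (r ^ 2 / 4) = volume
      {x | ∀ i, B.repr x i ∈ Icc (![1 / 2, r, 0] i) (![3 / 4, 2 * r, r] i)} := by
    rw [volume_setOf_forall_repr_mem_Icc, Fin.prod_univ_three, ← ENNReal.ofReal_mul (by norm_num),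
      ← ENNReal.ofReal_mul (by
        simp only [Nat.succ_eq_add_one, Nat.reduceAdd, Fin.isValue, Matrix.cons_val_zero, one_div,
          Matrix.cons_val_one]
        linarith)]
    congr 1
    simp only [Nat.succ_eq_add_one, Nat.reduceAdd, Fin.isValue, Matrix.cons_val_zero, one_div,
      Matrix.cons_val_one, Matrix.cons_val, sub_zero]
    ring
  rw [hpatch, hbox]
  refine measure_le_toSphere _ measurableSet_sphericalPatch fun x hx => ?_
  have hnorm : ‖x‖ ^ 2 = ⟪e, x⟫ ^ 2 + ⟪u, x⟫ ^ 2 + B.repr x 2 ^ 2 := by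
    rw [← B.repr.norm_map x, EuclideanSpace.norm_sq_eq, Fin.sum_univ_three, ← hBe, ← hBu]
    simp [B.repr_apply_apply]
  have hx₀ := hx 0
  have hx₁ := hx 1
  rw [B.repr_apply_apply, hBe] at hx₀
  rw [B.repr_apply_apply, hBu] at hx₁
  exact exists_smul_eq_of_mem_box he hr hr' hx₀ hx₁ (hx 2) hnorm

end Patch

/-! ### Bobylev solutions near the initial time -/

lemma eventually_nhdsGT_forall_mem_Ioc {p : ℝ → Prop} (h : ∀ᶠ x in 𝓝[>] 0, p x) {c : ℝ}
    (hc : 0 < c) : ∀ᶠ r in 𝓝[>] 0, ∀ x ∈ Ioc 0 (c * r), p x := by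
  obtain ⟨ε, hε, hp⟩ := mem_nhdsGT_iff_exists_Ioc_subset.1 h
  have hε' : 0 < ε / c := div_pos hε hc
  filter_upwards [Ioc_mem_nhdsGT hε'] with r hr x hx
  exact hp ⟨hx.1, hx.2.trans ((le_div_iff₀' hc).1 hr.2)⟩

lemma charFn_eq_charFun_neg (Ψ : Measure E3) (ξ : E3) : charFn Ψ ξ = charFun Ψ (-ξ) := by
  rw [charFn, charFun_apply]
  congr with v
  rw [inner_neg_right]
  push_cast
  ring_nf

lemma modulusDefect_charFn (Ψ : Measure E3) :
    modulusDefect (charFn Ψ) = modulusDefect (charFun Ψ) := by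
  ext ξ
  simp [modulusDefect, charFn_eq_charFun_neg, charFun_neg]

lemma IsCharFn.quasiSubadditive_modulusDefect {φ : E3 → ℂ} (h : IsCharFn φ) :
    QuasiSubadditive (modulusDefect φ) := by
  obtain ⟨Ψ, _, rfl⟩ := h
  rw [modulusDefect_charFn]
  exact quasiSubadditive_modulusDefect_charFun

lemma ae_mem_line_of_measure_eq_one {E : Type*} [NormedAddCommGroup E] [NormedSpace ℝ E]
    [MeasurableSpace E] [BorelSpace E] {μ : Measure E} [IsProbabilityMeasure μ] {v₀ w : E}
    (h : μ {v | ∃ τ : ℝ, v = v₀ + τ • w} = 1) : ∀ᵐ v ∂μ, ∃ τ : ℝ, v = v₀ + τ • w := by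
  have hset : {v | ∃ τ : ℝ, v = v₀ + τ • w} = (· - v₀) ⁻¹' (ℝ ∙ w : Set E) := by
    ext v
    simp only [Set.mem_ofPred_eq, Set.mem_preimage, SetLike.mem_coe, Submodule.mem_span_singleton,
      eq_sub_iff_add_eq', eq_comm]
  refine (mem_ae_iff_prob_eq_one ?_).2 h
  rw [hset]
  exact ((ℝ ∙ w).closed_of_finiteDimensional.preimage (continuous_sub_right v₀)).measurableSet

instance : IsFiniteMeasure sphμ :=
  inferInstanceAs (IsFiniteMeasure (volume : Measure E3).toSphere)

lemma continuous_xiMinus (ξ : E3) : Continuous (xiMinus ξ) := by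
  unfold xiMinus
  fun_prop

lemma xiPlus_add_xiMinus (ξ : E3) (σ : sphere (0 : E3) 1) : xiPlus ξ σ + xiMinus ξ σ = ξ := by
  unfold xiPlus xiMinus
  module

/-- The initial time derivative of the modulus defect of a Bobylev solution with initial datum
`φ`, at a frequency where this defect vanishes initially. -/
def initialDefectRate (b : ℝ → ℝ) (φ : E3 → ℂ) (η : E3) : ℝ :=
  2 * ∫ σ, b (⟪η, (σ : E3)⟫ / ‖η‖) * modulusDefect φ (xiMinus η σ) ∂sphμ

/-- The modulus defect of a time-dependent function divided by the time. For Bobylev solutions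
it is studied as `t → 0+`. -/
def rescaledDefect (ψ : ℝ → E3 → ℂ) (t : ℝ) (ξ : E3) : ℝ := t⁻¹ * modulusDefect (ψ t) ξ

section Solution

variable {b : ℝ → ℝ} {ψ : ℝ → E3 → ℂ}

lemma IsBobylevSolution.continuous {ψ₀ : E3 → ℂ} (hψ : IsBobylevSolution b ψ ψ₀) {t : ℝ}
    (ht : 0 ≤ t) : Continuous (ψ t) :=
  hψ.cont.comp_continuous (f := fun ξ : E3 => (t, ξ)) (by fun_prop) fun _ => ⟨ht, mem_univ _⟩

lemma IsBobylevSolution.continuous_modulusDefect {ψ₀ : E3 → ℂ} (hψ : IsBobylevSolution b ψ ψ₀)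
    {t : ℝ} (ht : 0 ≤ t) : Continuous (modulusDefect (ψ t)) :=
  continuous_const.sub ((hψ.continuous ht).norm.pow 2)

lemma IsBobylevSolution.eventually_continuous_rescaledDefect {ψ₀ : E3 → ℂ}
    (hψ : IsBobylevSolution b ψ ψ₀) (S : Submodule ℝ E3) :
    ∀ᶠ t in 𝓝[>] 0, Continuous fun x : S => rescaledDefect ψ t x := by
  filter_upwards [self_mem_nhdsWithin] with t ht
  exact continuous_const.mul
    ((hψ.continuous_modulusDefect (le_of_lt ht)).comp continuous_subtype_val)

lemma IsBobylevSolution.eventually_quasiSubadditive_rescaledDefect {ψ₀ : E3 → ℂ}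
    (hψ : IsBobylevSolution b ψ ψ₀) (S : Submodule ℝ E3) :
    ∀ᶠ t in 𝓝[>] 0, QuasiSubadditive fun x : S => rescaledDefect ψ t x := by
  filter_upwards [self_mem_nhdsWithin] with t ht
  exact ((hψ.isCharFn t (le_of_lt ht)).quasiSubadditive_modulusDefect.comp_addMonoidHom
    S.subtype.toAddMonoidHom).const_mul (inv_nonneg.2 (le_of_lt ht))

variable {F₀ : Measure E3} [IsProbabilityMeasure F₀] (hψ : IsBobylevSolution b ψ (charFn F₀))

section ConstantInner

variable {η : E3} {a : ℝ} (hη : ∀ᵐ v ∂F₀, ⟪v, η⟫ = a)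
include hψ hη

lemma conj_mul_bobylevIntegrand_zero (σ : sphere (0 : E3) 1) :
    (starRingEnd ℂ) (ψ 0 η) * bobylevIntegrand b ψ 0 η σ =
      ((-(b (⟪η, (σ : E3)⟫ / ‖η‖) * modulusDefect (charFn F₀) (xiMinus η σ)) : ℝ) : ℂ) := by
  have hsum : -xiPlus η σ + -xiMinus η σ = -η := by
    rw [← neg_add, xiPlus_add_xiMinus]
  have hphase := conj_mul_charFun_mul_sub_charFun_add (μ := F₀) (x := -xiPlus η σ)
    (y := -xiMinus η σ) (a := -a) (hη.mono fun v hv => by rw [hsum, inner_neg_right, hv])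
  rw [hsum, ← charFn_eq_charFun_neg, ← charFn_eq_charFun_neg, ← charFn_eq_charFun_neg,
    quasiSubadditive_modulusDefect_charFun.map_neg, ← modulusDefect_charFn] at hphase
  rw [bobylevIntegrand, hψ.init, mul_left_comm, hphase]
  push_cast
  ring

lemma integrable_kernel_mul_modulusDefect :
    Integrable (fun σ : sphere (0 : E3) 1 =>
      b (⟪η, (σ : E3)⟫ / ‖η‖) * modulusDefect (charFn F₀) (xiMinus η σ)) sphμ := by
  have hint := ((hψ.integrable 0 le_rfl η).const_mul ((starRingEnd ℂ) (ψ 0 η))).re.neg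
  refine hint.congr (Eventually.of_forall fun σ => ?_)
  simp [conj_mul_bobylevIntegrand_zero hψ hη]

lemma tendsto_rescaledDefect :
    Tendsto (fun t => rescaledDefect ψ t η) (𝓝[>] 0)
      (𝓝 (initialDefectRate b (charFn F₀) η)) := by
  have hderiv := (((hψ.eq 0 le_rfl η).norm_sq.const_sub 1).mono Ioi_subset_Ici_self)
  rw [hasDerivWithinAt_iff_tendsto_slope' self_notMem_Ioi] at hderiv
  have hrate : -(2 * ⟪ψ 0 η, ∫ σ, bobylevIntegrand b ψ 0 η σ ∂sphμ⟫) =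
      initialDefectRate b (charFn F₀) η := by
    rw [Complex.inner, mul_comm _ ((starRingEnd ℂ) _), ← integral_const_mul]
    simp_rw [conj_mul_bobylevIntegrand_zero hψ hη]
    rw [integral_complex_ofReal, integral_neg, initialDefectRate]
    simp
  have hzero : 1 - ‖ψ 0 η‖ ^ 2 = 0 := by
    rw [hψ.init, charFn_eq_charFun_neg, charFun_neg, RCLike.norm_conj,
      charFun_eq_exp_of_ae_inner_eq hη, Complex.norm_exp_ofReal_mul_I]
    norm_num
  rw [hrate] at hderiv
  refine hderiv.congr fun t => ?_
  rw [slope_def_field, hzero, rescaledDefect, modulusDefect]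
  ring

end ConstantInner

end Solution

section LineSolution

variable {b : ℝ → ℝ} {ψ : ℝ → E3 → ℂ} {F₀ : Measure E3} [IsProbabilityMeasure F₀] {v₀ w : E3}

lemma modulusDefect_xiMinus_of_ae_mem_line (hline : ∀ᵐ v ∂F₀, ∃ τ : ℝ, v = v₀ + τ • w)
    (hw : ‖w‖ = 1) {η : E3} (hη : ⟪w, η⟫ = 0) (σ : sphere (0 : E3) 1) :
    modulusDefect (charFn F₀) (xiMinus η σ) =
      modulusDefect (charFn F₀) ((‖η‖ / 2 * ⟪w, (σ : E3)⟫) • w) := by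
  rw [modulusDefect_charFn, ← quasiSubadditive_modulusDefect_charFun.map_neg (_ • w)]
  refine modulusDefect_charFun_congr_of_ae_mem_line hline ?_
  rw [xiMinus, inner_sub_right, real_inner_smul_right, real_inner_smul_right, hη, inner_neg_right,
    real_inner_smul_right, real_inner_self_eq_norm_sq, hw]
  ring

lemma kernel_mul_modulusDefect_abs_smul (hline : ∀ᵐ v ∂F₀, ∃ τ : ℝ, v = v₀ + τ • w)
    (hw : ‖w‖ = 1) {e : E3} (he : ⟪w, e⟫ = 0) (σ : sphere (0 : E3) 1) (r : ℝ) :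
    b (⟪|r| • e, (σ : E3)⟫ / ‖|r| • e‖) * modulusDefect (charFn F₀) (xiMinus (|r| • e) σ) =
      b (⟪e, (σ : E3)⟫ / ‖e‖) *
        modulusDefect (charFn F₀) (r • (‖e‖ / 2 * ⟪w, (σ : E3)⟫) • w) := by
  have hD : QuasiSubadditive (modulusDefect (charFn F₀)) :=
    IsCharFn.quasiSubadditive_modulusDefect ⟨F₀, inferInstance, rfl⟩
  rw [modulusDefect_xiMinus_of_ae_mem_line hline hw
    (by rw [real_inner_smul_right, he, mul_zero]), norm_smul, norm_of_nonneg (abs_nonneg r),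
    real_inner_smul_left, mul_div_assoc |r| ‖e‖, mul_assoc |r|, mul_smul |r|]
  rcases eq_or_ne r 0 with rfl | hr
  · simp [hD.map_zero]
  · rw [mul_div_mul_left _ _ (abs_ne_zero.2 hr)]
    rcases abs_choice r with h | h <;> simp only [h, neg_smul, hD.map_neg]

variable (hψ : IsBobylevSolution b ψ (charFn F₀)) (hw : ‖w‖ = 1)
  (hline : ∀ᵐ v ∂F₀, ∃ τ : ℝ, v = v₀ + τ • w)
include hψ hw hline

lemma initialDefectRate_pos (hb_nonneg : ∀ x, 0 ≤ b x)
    (hb_pos : ∀ᶠ θ in 𝓝[>] 0, 0 < b (cos θ)) (hnotdirac : ∀ u, F₀ {u} ≠ 1) {η : E3}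
    (hη : ⟪w, η⟫ = 0) (hη₀ : η ≠ 0) : 0 < initialDefectRate b (charFn F₀) η := by
  have hint := integrable_kernel_mul_modulusDefect hψ (ae_inner_eq_of_ae_mem_line hline hη)
  simp only [initialDefectRate, modulusDefect_xiMinus_of_ae_mem_line hline hw hη,
    modulusDefect_charFn] at hint ⊢
  refine mul_pos two_pos ((integral_pos_iff_support_of_nonneg (fun σ => mul_nonneg (hb_nonneg _)
    (quasiSubadditive_modulusDefect_charFun.nonneg _)) hint).2 ?_)
  have hη_norm := norm_pos_iff.2 hη₀
  have hdefect := nhdsGT_le_nhdsNE 0 (eventually_modulusDefect_smul_pos hline hnotdirac)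
  obtain ⟨r, ⟨hr_kernel, hr_defect⟩, hr⟩ :=
    (((eventually_nhdsGT_forall_mem_Ioc hb_pos (c := 8) (by norm_num)).and
      (eventually_nhdsGT_forall_mem_Ioc hdefect (c := 2 * ‖η‖) (by positivity))).and
      (Ioc_mem_nhdsGT (show (0 : ℝ) < 1 / 10 by norm_num))).exists
  have hpatch := ofReal_sq_div_four_le_sphμ_sphericalPatch hη₀ hw
    (by rw [real_inner_comm, hη]) hr.1 hr.2
  refine (lt_of_lt_of_le (ENNReal.ofReal_pos.2 (by have := hr.1; positivity)) hpatch).trans_le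
    (measure_mono fun σ ⟨hσw, hσξ⟩ => ne_of_gt (mul_pos ?_ ?_))
  · rw [inner_div_norm_eq_cos_angle]
    exact hr_kernel _ hσξ
  · refine hr_defect _ ⟨mul_pos (half_pos hη_norm) (hr.1.trans_le hσw.1), ?_⟩
    nlinarith [hσw.2]

lemma tendsto_initialDefectRate_smul (hb_meas : Measurable b) (hb_nonneg : ∀ x, 0 ≤ b x) {e : E3}
    (he : ⟪w, e⟫ = 0) {C : ℝ}
    (hC : ∀ᶠ r : ℝ in 𝓝 0, initialDefectRate b (charFn F₀) (|r| • e) ≤ C) :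
    Tendsto (fun r : ℝ => initialDefectRate b (charFn F₀) (|r| • e)) (𝓝 0) (𝓝 0) := by
  have hcont : Continuous (modulusDefect (charFn F₀)) :=
    hψ.init ▸ hψ.continuous_modulusDefect le_rfl
  have hD : QuasiSubadditive (modulusDefect (charFn F₀)) :=
    IsCharFn.quasiSubadditive_modulusDefect ⟨F₀, inferInstance, rfl⟩
  have hint (r : ℝ) := integrable_kernel_mul_modulusDefect hψ (ae_inner_eq_of_ae_mem_line hline
    (show ⟪w, |r| • e⟫ = 0 by rw [real_inner_smul_right, he, mul_zero]))
  simp only [initialDefectRate, kernel_mul_modulusDefect_abs_smul hline hw he] at hC hint ⊢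
  let g (σ : sphere (0 : E3) 1) (r : ℝ) : ℝ :=
    b (⟪e, (σ : E3)⟫ / ‖e‖) * modulusDefect (charFn F₀) (r • (‖e‖ / 2 * ⟪w, (σ : E3)⟫) • w)
  have hg (σ : sphere (0 : E3) 1) : QuasiSubadditive (g σ) :=
    (hD.comp_addMonoidHom ((LinearMap.toSpanSingleton ℝ E3 _).toAddMonoidHom)).const_mul
      (hb_nonneg _)
  have hg_cont (σ : sphere (0 : E3) 1) : Continuous (g σ) :=
    continuous_const.mul (hcont.comp (by fun_prop))
  have hg_meas : Measurable fun p : sphere (0 : E3) 1 × ℝ => g p.1 p.2 :=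
    (hb_meas.comp (by fun_prop)).mul (hcont.measurable.comp (by fun_prop))
  simpa using (QuasiSubadditive.tendsto_integral_nhds_zero hg hg_cont
    hg_meas.aestronglyMeasurable hint
    (hC.mono fun r hr => (le_div_iff₀' two_pos).2 hr)).const_mul 2

lemma tendsto_initialDefectRate_nhds_zero (hb_meas : Measurable b) (hb_nonneg : ∀ x, 0 ≤ b x) :
    Tendsto (fun x : (ℝ ∙ w)ᗮ => initialDefectRate b (charFn F₀) x) (𝓝 0) (𝓝 0) := by
  have hortho (x : (ℝ ∙ w)ᗮ) : ⟪w, (x : E3)⟫ = 0 :=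
    Submodule.mem_orthogonal_singleton_iff_inner_right.1 x.2
  have hlim (x : (ℝ ∙ w)ᗮ) := tendsto_rescaledDefect hψ
    (ae_inner_eq_of_ae_mem_line hline (hortho x))
  have hcont := hψ.eventually_continuous_rescaledDefect (ℝ ∙ w)ᗮ
  have hQ := hψ.eventually_quasiSubadditive_rescaledDefect (ℝ ∙ w)ᗮ
  have hn := QuasiSubadditive.of_tendsto hQ hlim
  obtain ⟨C, hC⟩ := QuasiSubadditive.exists_eventually_nhds_zero_le_of_tendsto hcont hQ hlim
  refine hn.tendsto_nhds_zero_of_forall_smul fun e => ?_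
  have habs : Tendsto (fun r : ℝ => |r| • e) (𝓝 0) (𝓝 0) := by
    have : Continuous fun r : ℝ => |r| • e := by fun_prop
    simpa using this.tendsto 0
  refine (tendsto_initialDefectRate_smul hψ hw hline hb_meas hb_nonneg (hortho e)
    (habs.eventually hC)).congr fun r => ?_
  rcases abs_choice r with h | h
  · rw [h, Submodule.coe_smul]
  · simpa [h] using hn.map_neg (r • e)

lemma exists_mul_le_modulusDefect_of_inner_eq_zero (hb_meas : Measurable b)
    (hb_nonneg : ∀ x, 0 ≤ b x) (hb_pos : ∀ᶠ θ in 𝓝[>] 0, 0 < b (cos θ))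
    (hnotdirac : ∀ u, F₀ {u} ≠ 1) {ρ₁ ρ₂ : ℝ} (hρ₁ : 0 < ρ₁) :
    ∃ c > 0, ∀ᶠ t in 𝓝[>] 0, ∀ η : E3, ⟪w, η⟫ = 0 → ‖η‖ ∈ Icc ρ₁ ρ₂ →
      c * t ≤ modulusDefect (ψ t) η := by
  have hortho (x : (ℝ ∙ w)ᗮ) : ⟪w, (x : E3)⟫ = 0 :=
    Submodule.mem_orthogonal_singleton_iff_inner_right.1 x.2
  have hA : IsCompact {x : (ℝ ∙ w)ᗮ | ‖x‖ ∈ Icc ρ₁ ρ₂} :=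
    (isCompact_closedBall 0 ρ₂).of_isClosed_subset (isClosed_Icc.preimage continuous_norm)
      fun x hx => mem_closedBall_zero_iff.2 hx.2
  obtain ⟨c, hc, hle⟩ := QuasiSubadditive.exists_pos_forall_mem_le_of_tendsto
    (hψ.eventually_continuous_rescaledDefect (ℝ ∙ w)ᗮ)
    (hψ.eventually_quasiSubadditive_rescaledDefect (ℝ ∙ w)ᗮ)
    (fun x => tendsto_rescaledDefect hψ (ae_inner_eq_of_ae_mem_line hline (hortho x)))
    (tendsto_initialDefectRate_nhds_zero hψ hw hline hb_meas hb_nonneg) hA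
    fun x hx => initialDefectRate_pos hψ hw hline hb_nonneg hb_pos hnotdirac (hortho x)
      (norm_pos_iff.1 (hρ₁.trans_le hx.1))
  refine ⟨c, hc, ?_⟩
  filter_upwards [hle, self_mem_nhdsWithin] with t ht ht₀ η hη hη_norm
  have := ht ⟨η, Submodule.mem_orthogonal_singleton_iff_inner_right.2 hη⟩ hη_norm
  rwa [rescaledDefect, le_inv_mul_iff₀ ht₀, mul_comm] at this

end LineSolution

/-! ### Coercivity -/

/-- The weight multiplying `|h(ξ)|²` in the coercivity estimate: the average of `1 - |φ(ξ⁻)|`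
against the collision kernel. -/
def smoothingWeight (b : ℝ → ℝ) (φ : E3 → ℂ) (ξ : E3) : ENNReal :=
  ∫⁻ σ, ENNReal.ofReal (b (⟪ξ, (σ : E3)⟫ / ‖ξ‖) * (1 - ‖φ (xiMinus ξ σ)‖)) ∂sphμ

section Pairing

variable {b : ℝ → ℝ} {φ : E3 → ℂ} {ξ u : E3}

lemma reflection_orthogonal_apply_of_norm_eq_one {E : Type*} [NormedAddCommGroup E]
    [InnerProductSpace ℝ E] {u : E} (hu : ‖u‖ = 1) (x : E) :
    (ℝ ∙ u)ᗮ.reflection x = x - (2 * ⟪u, x⟫) • u := by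
  rw [Submodule.reflection_orthogonal_apply, Submodule.reflection_singleton_apply, hu]
  simp only [Real.ringHom_apply, one_pow, div_one, neg_sub, sub_right_inj]
  module

lemma inner_sphereMap_reflection (hu : ‖u‖ = 1) (hξu : ⟪ξ, u⟫ = 0) (σ : sphere (0 : E3) 1) :
    ⟪ξ, (sphereMap (ℝ ∙ u)ᗮ.reflection σ : E3)⟫ = ⟪ξ, (σ : E3)⟫ := by
  change ⟪ξ, (ℝ ∙ u)ᗮ.reflection (σ : E3)⟫ = _
  rw [reflection_orthogonal_apply_of_norm_eq_one hu, inner_sub_right, real_inner_smul_right, hξu,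
    mul_zero, sub_zero]

lemma xiMinus_sphereMap_reflection_sub_xiMinus (hu : ‖u‖ = 1) (σ : sphere (0 : E3) 1) :
    xiMinus ξ (sphereMap (ℝ ∙ u)ᗮ.reflection σ) - xiMinus ξ σ = (‖ξ‖ * ⟪u, (σ : E3)⟫) • u := by
  change (1 / 2 : ℝ) • ξ - (‖ξ‖ / 2) • (ℝ ∙ u)ᗮ.reflection (σ : E3) - xiMinus ξ σ = _
  rw [reflection_orthogonal_apply_of_norm_eq_one hu, xiMinus]
  module

lemma lintegral_kernel_mul_modulusDefect_smul_le (hb_meas : Measurable b)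
    (hb_nonneg : ∀ x, 0 ≤ b x) (hφ : Continuous φ) (hD : QuasiSubadditive (modulusDefect φ))
    (hu : ‖u‖ = 1) (hξu : ⟪ξ, u⟫ = 0) :
    ∫⁻ σ : sphere (0 : E3) 1, ENNReal.ofReal (b (⟪ξ, (σ : E3)⟫ / ‖ξ‖) *
      (modulusDefect φ ((‖ξ‖ * ⟪u, (σ : E3)⟫) • u) / 4)) ∂sphμ ≤ 2 * smoothingWeight b φ ξ := by
  let f (σ : sphere (0 : E3) 1) : ENNReal :=
    ENNReal.ofReal (b (⟪ξ, (σ : E3)⟫ / ‖ξ‖) * (1 - ‖φ (xiMinus ξ σ)‖))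
  let R := sphereMap (ℝ ∙ u)ᗮ.reflection
  have hf : Measurable f := ENNReal.measurable_ofReal.comp <|
    (hb_meas.comp (by fun_prop)).mul
      (measurable_const.sub (hφ.comp (continuous_xiMinus ξ)).norm.measurable)
  have hsymm : 2 * smoothingWeight b φ ξ = ∫⁻ σ, (f σ + f (R σ)) ∂sphμ := by
    rw [lintegral_add_left hf, two_mul]
    exact congrArg (smoothingWeight b φ ξ + ·)
      ((measurePreserving_sphereMap (ℝ ∙ u)ᗮ.reflection).lintegral_comp hf).symm
  rw [hsymm]
  refine lintegral_mono fun σ => ?_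
  have hdefect := hD.map_sub_le (xiMinus ξ (R σ)) (xiMinus ξ σ)
  rw [xiMinus_sphereMap_reflection_sub_xiMinus hu] at hdefect
  have hle := modulusDefect_div_two_le φ (xiMinus ξ σ)
  have hle_R := modulusDefect_div_two_le φ (xiMinus ξ (R σ))
  have hnonneg := hD.nonneg (xiMinus ξ σ)
  have hnonneg_R := hD.nonneg (xiMinus ξ (R σ))
  simp only [f]
  rw [inner_sphereMap_reflection hu hξu,
    ← ENNReal.ofReal_add (mul_nonneg (hb_nonneg _) (by linarith))
      (mul_nonneg (hb_nonneg _) (by linarith)), ← mul_add]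
  exact ENNReal.ofReal_le_ofReal (mul_le_mul_of_nonneg_left (by linarith) (hb_nonneg _))

lemma ofReal_mul_sq_le_smoothingWeight (hb_meas : Measurable b) (hb_nonneg : ∀ x, 0 ≤ b x)
    (hφ : Continuous φ) (hD : QuasiSubadditive (modulusDefect φ)) (hξ : ξ ≠ 0) (hu : ‖u‖ = 1)
    (hξu : ⟪ξ, u⟫ = 0) {B m r : ℝ} (hB : 0 ≤ B) (hm : 0 ≤ m) (hr : 0 < r) (hr' : r ≤ 1 / 10)
    (hB_le : ∀ σ ∈ sphericalPatch ξ u r, B ≤ b (⟪ξ, (σ : E3)⟫ / ‖ξ‖))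
    (hm_le : ∀ τ ∈ Icc r (4 * r), m ≤ modulusDefect φ ((‖ξ‖ * τ) • u)) :
    ENNReal.ofReal (B * m / 32 * r ^ 2) ≤ smoothingWeight b φ ξ := by
  have htwo : 2 * ENNReal.ofReal (B * m / 32 * r ^ 2) ≤ 2 * smoothingWeight b φ ξ := by
    calc 2 * ENNReal.ofReal (B * m / 32 * r ^ 2)
        = ENNReal.ofReal (B * (m / 4)) * ENNReal.ofReal (r ^ 2 / 4) := by
          rw [← ENNReal.ofReal_ofNat, ← ENNReal.ofReal_mul (by norm_num),
            ← ENNReal.ofReal_mul (by positivity)]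
          congr 1
          ring
      _ ≤ ENNReal.ofReal (B * (m / 4)) * sphμ (sphericalPatch ξ u r) := by
          gcongr
          exact ofReal_sq_div_four_le_sphμ_sphericalPatch hξ hu hξu hr hr'
      _ = ∫⁻ _ in sphericalPatch ξ u r, ENNReal.ofReal (B * (m / 4)) ∂sphμ :=
          (setLIntegral_const _ _).symm
      _ ≤ ∫⁻ σ in sphericalPatch ξ u r, ENNReal.ofReal (b (⟪ξ, (σ : E3)⟫ / ‖ξ‖) *
            (modulusDefect φ ((‖ξ‖ * ⟪u, (σ : E3)⟫) • u) / 4)) ∂sphμ :=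
          setLIntegral_mono' measurableSet_sphericalPatch fun σ hσ =>
            ENNReal.ofReal_le_ofReal (mul_le_mul (hB_le σ hσ)
              (div_le_div_of_nonneg_right (hm_le _ hσ.1) (by norm_num)) (by positivity)
              (hb_nonneg _))
      _ ≤ _ := (setLIntegral_le_lintegral _ _).trans
          (lintegral_kernel_mul_modulusDefect_smul_le hb_meas hb_nonneg hφ hD hu hξu)
  exact (ENNReal.mul_le_mul_iff_right (by norm_num) (by norm_num)).1 htwo

lemma mul_rpow_le_kernel_of_mem_sphericalPatch {K p r : ℝ} (hK : 0 ≤ K) (hp : 0 ≤ p)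
    (hb : ∀ θ ∈ Ioc 0 (8 * r), K ≤ b (cos θ) * θ ^ p) {σ : sphere (0 : E3) 1}
    (hσ : σ ∈ sphericalPatch ξ u r) : K * (8 * r) ^ (-p) ≤ b (⟪ξ, (σ : E3)⟫ / ‖ξ‖) := by
  rw [inner_div_norm_eq_cos_angle]
  have hθ := hσ.2.1
  calc K * (8 * r) ^ (-p) ≤ K * InnerProductGeometry.angle ξ (σ : E3) ^ (-p) :=
        mul_le_mul_of_nonneg_left (rpow_le_rpow_of_nonpos hθ hσ.2.2 (neg_nonpos.2 hp)) hK
    _ ≤ _ := by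
      rw [rpow_neg hθ.le, ← div_eq_mul_inv, div_le_iff₀ (rpow_pos_of_pos hθ p)]
      exact hb _ hσ.2

lemma ofReal_mul_rpow_le_smoothingWeight (hb_meas : Measurable b) (hb_nonneg : ∀ x, 0 ≤ b x)
    (hφ : Continuous φ) (hD : QuasiSubadditive (modulusDefect φ)) {s K m : ℝ} (hs : -1 ≤ s)
    (hK : 0 ≤ K) (hm : 0 ≤ m) (hξ : 10 ≤ ‖ξ‖) (hu : ‖u‖ = 1) (hξu : ⟪ξ, u⟫ = 0)
    (hb : ∀ θ ∈ Ioc 0 (8 * ‖ξ‖⁻¹), K ≤ b (cos θ) * θ ^ (2 + 2 * s))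
    (hm_le : ∀ τ ∈ Icc (1 : ℝ) 4, m ≤ modulusDefect φ (τ • u)) :
    ENNReal.ofReal (K * 8 ^ (-(2 + 2 * s)) / 32 * m * ‖ξ‖ ^ (2 * s)) ≤
      smoothingWeight b φ ξ := by
  have hξ_pos : 0 < ‖ξ‖ := by linarith
  have hpow : ‖ξ‖ ^ (2 * s) = ‖ξ‖⁻¹ ^ (-(2 + 2 * s)) * ‖ξ‖⁻¹ ^ 2 := by
    rw [inv_rpow hξ_pos.le, rpow_neg hξ_pos.le, inv_inv, rpow_add hξ_pos, rpow_two, inv_pow]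
    field_simp
  have hweight := ofReal_mul_sq_le_smoothingWeight hb_meas hb_nonneg hφ hD
    (norm_pos_iff.1 hξ_pos) hu hξu (by positivity) hm (inv_pos.2 hξ_pos)
    (by rw [inv_le_comm₀ hξ_pos (by norm_num)]; linarith)
    (fun σ hσ => mul_rpow_le_kernel_of_mem_sphericalPatch hK (by linarith) hb hσ)
    fun τ hτ => hm_le _ ?_
  · convert hweight using 2
    rw [mul_rpow (by norm_num) (by positivity), hpow]
    ring
  · rw [mem_Icc, inv_le_iff_one_le_mul₀' hξ_pos, ← div_eq_mul_inv, le_div_iff₀' hξ_pos] at hτ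
    exact hτ

end Pairing

lemma ofReal_mul_setLIntegral_le_lintegral_mul {X : Type*} [MeasurableSpace X] {μ : Measure X}
    {S : Set X} (hS : MeasurableSet S) {a : ℝ} (ha : 0 ≤ a) {p q : X → ℝ} (hp : ∀ x, 0 ≤ p x)
    {W : X → ENNReal} (hW : ∀ x ∈ S, ENNReal.ofReal (a * p x) ≤ W x) :
    ENNReal.ofReal a * ∫⁻ x in S, ENNReal.ofReal (p x * q x) ∂μ ≤
      ∫⁻ x, W x * ENNReal.ofReal (q x) ∂μ := by
  rw [← lintegral_const_mul' _ _ ENNReal.ofReal_ne_top]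
  refine (setLIntegral_mono' hS fun x hx => ?_).trans (setLIntegral_le_lintegral S _)
  rw [ENNReal.ofReal_mul (hp x), ← mul_assoc, ← ENNReal.ofReal_mul ha]
  gcongr
  exact hW x hx

lemma eventually_forall_ofReal_mul_rpow_le_smoothingWeight {b : ℝ → ℝ} {ψ : ℝ → E3 → ℂ}
    {F₀ : Measure E3} [IsProbabilityMeasure F₀] {v₀ w : E3}
    (hψ : IsBobylevSolution b ψ (charFn F₀)) (hw : ‖w‖ = 1)
    (hline : ∀ᵐ v ∂F₀, ∃ τ : ℝ, v = v₀ + τ • w) (hnotdirac : ∀ u, F₀ {u} ≠ 1)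
    (hb_meas : Measurable b) (hb_nonneg : ∀ x, 0 ≤ b x) {s K : ℝ} (hs : -1 ≤ s) (hK : 0 < K)
    (hb_sing : ∀ᶠ θ in 𝓝[>] 0, K ≤ b (cos θ) * θ ^ (2 + 2 * s)) :
    ∃ R, ∃ c > 0, ∀ᶠ t in 𝓝[>] 0, ∀ ξ : E3, R ≤ ‖ξ‖ →
      ENNReal.ofReal (c * t * ‖ξ‖ ^ (2 * s)) ≤ smoothingWeight b (ψ t) ξ := by
  have hb_pos : ∀ᶠ θ in 𝓝[>] 0, 0 < b (cos θ) := by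
    filter_upwards [hb_sing, self_mem_nhdsWithin] with θ hθ hθ_pos
    exact pos_of_mul_pos_left (hK.trans_le hθ) (rpow_nonneg (le_of_lt hθ_pos) _)
  obtain ⟨c, hc, hannulus⟩ := exists_mul_le_modulusDefect_of_inner_eq_zero hψ hw hline hb_meas
    hb_nonneg hb_pos hnotdirac (ρ₂ := 4) one_pos
  obtain ⟨R, hR⟩ := eventually_atTop.1 <| tendsto_inv_atTop_nhdsGT_zero.eventually
    (eventually_nhdsGT_forall_mem_Ioc hb_sing (c := 8) (by norm_num))
  refine ⟨max R 10, K * 8 ^ (-(2 + 2 * s)) / 32 * c, by positivity, ?_⟩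
  filter_upwards [hannulus, self_mem_nhdsWithin] with t ht ht₀ ξ hξ
  have ht₀' : 0 ≤ t := le_of_lt ht₀
  obtain ⟨u, hu, hξu, hwu⟩ := exists_unit_inner_eq_zero ξ w
  rw [mul_assoc _ c t]
  refine ofReal_mul_rpow_le_smoothingWeight hb_meas hb_nonneg (hψ.continuous ht₀')
    (hψ.isCharFn t ht₀').quasiSubadditive_modulusDefect hs hK.le (by positivity)
    ((le_max_right _ _).trans hξ) hu hξu (hR _ ((le_max_left _ _).trans hξ)) fun τ hτ =>
      ht _ (by rw [real_inner_smul_right, hwu, mul_zero]) ?_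
  rwa [norm_smul, hu, mul_one, norm_of_nonneg (by linarith [hτ.1])]

theorem degenerate_coercivity_on_line_general {b : ℝ → ℝ} {ψ : ℝ → E3 → ℂ}
    {F₀ : Measure E3} [IsProbabilityMeasure F₀] {v₀ w : E3}
    (hψ : IsBobylevSolution b ψ (charFn F₀)) (hw : ‖w‖ = 1)
    (hline : ∀ᵐ v ∂F₀, ∃ τ : ℝ, v = v₀ + τ • w) (hnotdirac : ∀ u, F₀ {u} ≠ 1)
    (hb_meas : Measurable b) (hb_nonneg : ∀ x, 0 ≤ b x) {s K : ℝ} (hs : -1 ≤ s) (hK : 0 < K)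
    (hb_sing : ∀ᶠ θ in 𝓝[>] 0, K ≤ b (cos θ) * θ ^ (2 + 2 * s)) :
    ∃ R > (0 : ℝ), ∃ T > (0 : ℝ), ∃ c > (0 : ℝ), ∀ t ∈ Icc (0 : ℝ) T, ∀ h : E3 → ℂ,
      ENNReal.ofReal (c * t) *
          (∫⁻ ξ : E3 in {ξ : E3 | R ≤ ‖ξ‖}, ENNReal.ofReal (‖ξ‖ ^ (2 * s) * ‖h ξ‖ ^ 2)) ≤
        ∫⁻ ξ : E3, smoothingWeight b (ψ t) ξ * ENNReal.ofReal (‖h ξ‖ ^ 2) := by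
  obtain ⟨R, c, hc, hweight⟩ := eventually_forall_ofReal_mul_rpow_le_smoothingWeight hψ hw hline
    hnotdirac hb_meas hb_nonneg hs hK hb_sing
  obtain ⟨T, hT, hweight⟩ := mem_nhdsGT_iff_exists_Ioc_subset.1 hweight
  refine ⟨max R 1, by positivity, T, hT, c, hc, fun t ht h => ?_⟩
  rcases ht.1.eq_or_lt with rfl | ht₀
  · simp
  · exact ofReal_mul_setLIntegral_le_lintegral_mul
      (measurableSet_le measurable_const measurable_norm) (mul_nonneg hc.le ht.1)
      (fun ξ => by positivity) fun ξ hξ => hweight ⟨ht₀, ht.2⟩ ξ ((le_max_left R 1).trans hξ)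

/-- time-degenerate coercivity when the initial measure is
concentrated on a straight line but is not a single Dirac mass. -/
theorem degenerate_coercivity_on_line
    (s K : ℝ) (hs0 : 0 < s) (hs1 : s < 1) (hK : 0 < K)
    (b : ℝ → ℝ) (hb_meas : Measurable b) (hb_nonneg : ∀ x, 0 ≤ b x)
    (hb_sing : KernelSingular b s K)
    (α : ℝ) (hα : 2 * s < α) (hα2 : α ≤ 2)
    (F₀ : Measure E3) [IsProbabilityMeasure F₀]
    (v₀ w : E3) (hw : ‖w‖ = 1)
    (hline : F₀ {v : E3 | ∃ τ : ℝ, v = v₀ + τ • w} = 1)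
    (hnotdirac : ∀ u : E3, F₀ {u} ≠ 1)
    (ψ₀ : E3 → ℂ) (hψ₀ : ψ₀ = charFn F₀) (hψ₀K : KBdd α ψ₀)
    (ψ : ℝ → E3 → ℂ) (hψ : IsBobylevSolution b ψ ψ₀) :
    ∃ R > (0:ℝ), ∃ T > (0:ℝ), ∃ c > (0:ℝ), ∀ t ∈ Set.Icc (0:ℝ) T,
      ∀ h : E3 → ℂ, Measurable h →
      (∫⁻ ξ : E3, ENNReal.ofReal ((1 + ‖ξ‖ ^ 2) ^ s * ‖h ξ‖ ^ 2)) < ⊤ →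
      ENNReal.ofReal (c * t) *
          (∫⁻ ξ : E3 in {ξ : E3 | R ≤ ‖ξ‖}, ENNReal.ofReal (‖ξ‖ ^ (2*s) * ‖h ξ‖ ^ 2)) ≤
        ∫⁻ ξ : E3,
          (∫⁻ σ, ENNReal.ofReal
              (b (⟪ξ, (σ : E3)⟫ / ‖ξ‖) * (1 - ‖ψ t (xiMinus ξ σ)‖)) ∂sphμ)
            * ENNReal.ofReal (‖h ξ‖ ^ 2) := by
  subst hψ₀
  obtain ⟨R, hR, T, hT, c, hc, hle⟩ := degenerate_coercivity_on_line_general hψ hw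
    (ae_mem_line_of_measure_eq_one hline) hnotdirac hb_meas hb_nonneg (by linarith)
    (half_pos hK) (hb_sing.eventually (le_mem_nhds (half_lt_self hK)))
  exact ⟨R, hR, T, hT, c, hc, fun t ht h _ _ => hle t ht h⟩
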